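/- Fix integers k ≥ 2 and c ≥ 2. For every integer n ≥ 1, the adaptive-sampler output Ŷ distributed according to f_{(n,c)} satisfies Pr[Ŷ > 2n] ≤ (1 − 1/k^c)^n. -/

import Mathlib

/-- Success probability of flip `i+1` of the adaptive sampler: `p_n(j) = 1/(max(n-j,0)+k)^c`
(natural subtraction truncates at zero). -/
noncomputable def pAdapt (k c n j : ℕ) : ℝ := 1 / (((n - j + k : ℕ) : ℝ)) ^ c

/-- Geometric PMF `Geom_q(i) = (1-q)^{i-1}·q` for `i ≥ 1`. -/
noncomputable def geomPMF (q : ℝ) (i : ℕ) : ℝ := (1 - q) ^ (i - 1) * q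

/-- The adaptive-sampler output distribution `f_{(n,c)}` on ℕ:
`f_{(n,c)}(i) = p_n(i)·∏_{j=0}^{i-1}(1 - p_n(j))` for `i ≤ n`, and
`f_{(n,c)}(i) = Geom_{1/k^c}(i-n)·∏_{j=0}^{n-1}(1 - p_n(j))` for `i > n`. -/
noncomputable def fAdapt (k c n i : ℕ) : ℝ :=
  if i ≤ n then pAdapt k c n i * ∏ j ∈ Finset.range i, (1 - pAdapt k c n j)
  else geomPMF (1 / (k : ℝ) ^ c) (i - n) * ∏ j ∈ Finset.range n, (1 - pAdapt k c n j)

/-! Beyond `n`, the weights `f_{(n,c)}` are the geometric law of parameter `q = 1 / k ^ c`, shifted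
by `n` and scaled by `P = ∏ j < n, (1 - p_n(j))`. Memorylessness makes their total mass beyond
`n + m` exactly `(1 - q) ^ m * P`, and `P ≤ 1`. Since `p_n(n) = q`, the values at `n` and `n + 1`
both equal `q * P`, so the weights sum to `1 + q * P` rather than `1`; the tail bound is a statement
about the weights themselves. -/

theorem hasSum_indicator_lt_iff {M : Type*} [AddCommMonoid M] [TopologicalSpace M]
    (f : ℕ → M) (N : ℕ) (a : M) :
    HasSum ({i | N < i}.indicator f) a ↔ HasSum (fun i => f (i + (N + 1))) a := by
  have range_shift : {i | N < i} = Set.range (· + (N + 1)) := by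
    ext i
    exact ⟨fun hi => ⟨i - (N + 1), Nat.sub_add_cancel hi⟩,
      fun ⟨j, hj⟩ => hj ▸ Nat.le_add_left (N + 1) j⟩
  rw [← hasSum_subtype_iff_indicator, range_shift]
  exact (add_left_injective (N + 1)).hasSum_range_iff

theorem hasSum_geomPMF_tail {q : ℝ} (hq : |1 - q| < 1) (m : ℕ) :
    HasSum (fun i => geomPMF q (i + (m + 1))) ((1 - q) ^ m) := by
  have q_ne_zero : q ≠ 0 := by
    rintro rfl
    norm_num at hq
  have shift (i : ℕ) : geomPMF q (i + (m + 1)) = (1 - q) ^ i * ((1 - q) ^ m * q) := by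
    rw [geomPMF, ← add_assoc, Nat.add_sub_cancel, pow_add, mul_assoc]
  have total : (1 - (1 - q))⁻¹ * ((1 - q) ^ m * q) = (1 - q) ^ m := by
    rw [sub_sub_cancel]
    field_simp
  simpa only [shift, total] using
    (hasSum_geometric_of_abs_lt_one hq).mul_right ((1 - q) ^ m * q)

theorem one_div_natCast_pow_le_one (k c : ℕ) : 1 / (k : ℝ) ^ c ≤ 1 := by
  rw [one_div, ← Nat.cast_pow]
  exact Nat.cast_inv_le_one _

theorem pAdapt_nonneg (k c n j : ℕ) : 0 ≤ pAdapt k c n j := by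
  unfold pAdapt
  positivity

theorem pAdapt_le_one (k c n j : ℕ) : pAdapt k c n j ≤ 1 :=
  one_div_natCast_pow_le_one _ c

theorem prod_one_sub_pAdapt_le_one (k c n : ℕ) (s : Finset ℕ) :
    ∏ j ∈ s, (1 - pAdapt k c n j) ≤ 1 :=
  Finset.prod_le_one (fun j _ => sub_nonneg.2 (pAdapt_le_one k c n j))
    fun j _ => sub_le_self 1 (pAdapt_nonneg k c n j)

theorem fAdapt_of_lt {k c n i : ℕ} (h : n < i) :
    fAdapt k c n i =
      geomPMF (1 / (k : ℝ) ^ c) (i - n) * ∏ j ∈ Finset.range n, (1 - pAdapt k c n j) :=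
  if_neg h.not_ge

theorem hasSum_fAdapt_tail {k : ℕ} (hk : 0 < k) (c n m : ℕ) :
    HasSum ({i | n + m < i}.indicator (fAdapt k c n))
      ((1 - 1 / (k : ℝ) ^ c) ^ m * ∏ j ∈ Finset.range n, (1 - pAdapt k c n j)) := by
  have bias_pos : 0 < 1 / (k : ℝ) ^ c := by positivity
  have abs_lt_one : |1 - 1 / (k : ℝ) ^ c| < 1 := by
    rw [abs_of_nonneg (sub_nonneg.2 (one_div_natCast_pow_le_one k c))]
    exact sub_lt_self 1 bias_pos
  have shift (i : ℕ) : fAdapt k c n (i + (n + m + 1)) =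
      geomPMF (1 / (k : ℝ) ^ c) (i + (m + 1)) * ∏ j ∈ Finset.range n, (1 - pAdapt k c n j) := by
    rw [fAdapt_of_lt (by omega), show i + (n + m + 1) - n = i + (m + 1) by omega]
  simpa only [hasSum_indicator_lt_iff, shift] using
    (hasSum_geomPMF_tail abs_lt_one m).mul_right (∏ j ∈ Finset.range n, (1 - pAdapt k c n j))

theorem adaptive_sampler_upper_tail_general {k : ℕ} (hk : 0 < k) (c n m : ℕ) :
    ∑' i, {i | n + m < i}.indicator (fAdapt k c n) i ≤ (1 - 1 / (k : ℝ) ^ c) ^ m := by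
  rw [(hasSum_fAdapt_tail hk c n m).tsum_eq]
  exact mul_le_of_le_one_right (pow_nonneg (sub_nonneg.2 (one_div_natCast_pow_le_one k c)) m)
    (prod_one_sub_pAdapt_le_one k c n (Finset.range n))

/-- Upper-tail bound for the adaptive sampler: `Pr[Ŷ > 2n] ≤ (1 - 1/k^c)^n`. -/
theorem adaptive_sampler_upper_tail (k c : ℕ) (hk : 2 ≤ k) (hc : 2 ≤ c) :
    ∀ n : ℕ, 1 ≤ n →
      (∑' i : ℕ, Set.indicator {i : ℕ | 2 * n < i} (fAdapt k c n) i)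
        ≤ (1 - 1 / (k : ℝ) ^ c) ^ n := by
  intro n _
  simpa only [two_mul] using adaptive_sampler_upper_tail_general (by omega) c n n
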